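/- For every t₀ ∈ ℕ, every cylinder B = [b]_{-n}^{n} and every ε > 0 there exists τ = τ(B,t₀,ε) ∈ ℕ such that P( ∪_{l=1}^{m_τ/N_τ} ( B ∩ T^{-lN_τ}B ∩ {w : |(T^{lN_τ})'(w) − λ_{t₀}| ≤ ε} ) ) ≥ 0.9 · P(B). -/

import Mathlib

open MeasureTheory Filter Topology

noncomputable section

/-- The sequence space `{0,1}^ℤ`, with `true` playing the role of `1`. -/
abbrev Xspace := ℤ → Bool

/-- The left shift `(Tw)_i = w_{i+1}`. -/
def shiftT (w : Xspace) : Xspace := fun i => w (i + 1)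

/-- The inverse of the left shift, so that `P ∘ T = Measure.map shiftInv P`. -/
def shiftInv (w : Xspace) : Xspace := fun i => w (i - 1)

/-- `coordWt p b` is `P_k({b})` when `P_k({0}) = p`. -/
def coordWt (p : ℝ) (b : Bool) : ℝ := if b then 1 - p else p

/-- The set `A_t = {∏_{u=1}^t λ_u^{x_u} : x_u ∈ ℤ, |x_u| ≤ n_u}`. -/
def Aset (lam : ℕ → ℝ) (nn : ℕ → ℕ) (t : ℕ) : Set ℝ :=
  {x | ∃ c : ℕ → ℤ, (∀ u, |c u| ≤ (nn u : ℤ)) ∧ x = ∏ u ∈ Finset.Icc 1 t, lam u ^ c u}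

/-- The data of Kosloff's inductive construction: a summable sequence `ε_t > 0`,
`M_0 = 1`, `λ_t = exp(2^{-k_t})` with `k_t = ⌊log₂(M_{t-1}/ε_t)⌋ + 1`,
`n_t` a positive integer satisfying Property *, `N_t = M_{t-1} + n_t`,
`m_t = N_t (2 + 2^{3N_t})`, `M_t = N_t + m_t`. -/
structure KosloffData where
  eps : ℕ → ℝ
  lam : ℕ → ℝ
  nn : ℕ → ℕ
  M : ℕ → ℕ
  N : ℕ → ℕ
  m : ℕ → ℕ
  eps_pos : ∀ t, 1 ≤ t → 0 < eps t
  eps_summable : Summable eps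
  M_zero : M 0 = 1
  lam_def : ∀ t, 1 ≤ t →
    lam t = Real.exp ((2 : ℝ) ^ (-(⌊Real.logb 2 ((M (t - 1) : ℝ) / eps t)⌋ + 1)))
  nn_pos : ∀ t, 1 ≤ t → 0 < nn t
  prop_star : ∀ t, 1 ≤ t → ∀ a ∈ Aset lam nn (t - 1), a ^ 2 ≤ lam t ^ ((nn t : ℝ) / 4)
  N_def : ∀ t, 1 ≤ t → N t = M (t - 1) + nn t
  m_def : ∀ t, 1 ≤ t → m t = N t * (2 + 2 ^ (3 * N t))
  M_def : ∀ t, 1 ≤ t → M t = N t + m t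

/-- `P` is the product measure `∏_k P_k` of Kosloff's construction, where `p k = P_k({0})`:
`p k = 1/2` for `k ≥ 0`, `p k = 1/(1+λ_t)` for `-N_t < k ≤ -M_{t-1}`, and `p k = 1/2`
for `-M_t < k ≤ -N_t`; cylinders get product mass. -/
def IsKosloffMeasure (D : KosloffData) (p : ℤ → ℝ) (P : Measure Xspace) : Prop :=
  IsProbabilityMeasure P ∧
  (∀ k : ℤ, 0 ≤ k → p k = 1 / 2) ∧
  (∀ t : ℕ, 1 ≤ t → ∀ k : ℤ, -(D.N t : ℤ) < k → k ≤ -(D.M (t - 1) : ℤ) →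
      p k = 1 / (1 + D.lam t)) ∧
  (∀ t : ℕ, 1 ≤ t → ∀ k : ℤ, -(D.M t : ℤ) < k → k ≤ -(D.N t : ℤ) → p k = 1 / 2) ∧
  (∀ k l : ℤ, ∀ b : ℤ → Bool,
    P {w : Xspace | ∀ i ∈ Finset.Icc k l, w i = b i}
      = ∏ i ∈ Finset.Icc k l, ENNReal.ofReal (coordWt (p i) (b i)))

/-- The Radon–Nikodym derivative `(Tⁿ)' = d(P∘Tⁿ)/dP`. -/
def rnD (P : Measure Xspace) (n : ℕ) : Xspace → ENNReal :=
  Measure.rnDeriv (Measure.map (shiftInv^[n]) P) P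

/-- `T` is nonsingular: `P∘T` and `P` are mutually absolutely continuous. -/
def ShiftNonsingular (P : Measure Xspace) : Prop :=
  Measure.map shiftInv P ≪ P ∧ P ≪ Measure.map shiftInv P

/-- The ratio set `R(T,P)` of the shift. -/
def ratioSet (P : Measure Xspace) : Set ℝ :=
  {a | 0 ≤ a ∧ ∀ A : Set Xspace, MeasurableSet A → 0 < P A → ∀ ε : ℝ, 0 < ε → ∃ n : ℕ,
      0 < P (A ∩ shiftT^[n] ⁻¹' A ∩ {w | |(rnD P n w).toReal - a| ≤ ε})}

/-- `t(n) = min {t ≥ 1 : n < N_t}`. -/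
def tOf (D : KosloffData) (n : ℕ) : ℕ := sInf {t : ℕ | 1 ≤ t ∧ n < D.N t}

/-- `Υ_u(w) = ∑_{k=-N_u+1}^{-M_{u-1}} w_k`. -/
def Ups (D : KosloffData) (u : ℕ) (w : Xspace) : ℤ :=
  ∑ k ∈ Finset.Icc (-(D.N u : ℤ) + 1) (-(D.M (u - 1) : ℤ)), (if w k then 1 else 0)

/-- `f_t(w) = ∏_{u=1}^t λ_u^{Υ_u(w)}`. -/
def fT (D : KosloffData) (t : ℕ) (w : Xspace) : ℝ :=
  ∏ u ∈ Finset.Icc 1 t, D.lam u ^ Ups D u w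

/-- The ratio `P_{k-n}({w_k}) / P_k({w_k})`. -/
def rr (p : ℤ → ℝ) (n : ℕ) (w : Xspace) (k : ℤ) : ℝ :=
  coordWt (p (k - n)) (w k) / coordWt (p k) (w k)

/-- A general product measure on `{0,1}^ℤ` with `q k = P_k({1})`. -/
def IsProductMeasure (q : ℤ → ℝ) (P : Measure Xspace) : Prop :=
  IsProbabilityMeasure P ∧
  ∀ k l : ℤ, ∀ b : ℤ → Bool,
    P {w : Xspace | ∀ i ∈ Finset.Icc k l, w i = b i}
      = ∏ i ∈ Finset.Icc k l, ENNReal.ofReal (if b i then q i else 1 - q i)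

lemma Mpos_succ (D : KosloffData) (t : ℕ) : D.M t < D.N (t+1) ∧ D.N (t+1) ≤ D.M (t+1) := by
  have h1 := D.N_def (t+1) (by omega)
  have h2 := D.M_def (t+1) (by omega)
  have h3 := D.nn_pos (t+1) (by omega)
  simp at h1
  omega

lemma M_strictMono (D : KosloffData) : StrictMono D.M :=
  strictMono_nat_of_lt_succ fun t => (Mpos_succ D t).1.trans_le (Mpos_succ D t).2

lemma M_gt (D : KosloffData) (t : ℕ) : t < D.M t := by
  induction t with
  | zero => rw [D.M_zero]; norm_num
  | succ k ih => have := M_strictMono D (show k < k+1 by omega); omega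

def cD (D : KosloffData) (t : ℕ) : ℝ :=
  (2 : ℝ) ^ (-(⌊Real.logb 2 ((D.M (t - 1) : ℝ) / D.eps t)⌋ + 1))

lemma cD_pos (D : KosloffData) (t : ℕ) : 0 < cD D t := by unfold cD; positivity

lemma lam_eq (D : KosloffData) (t : ℕ) (ht : 1 ≤ t) : D.lam t = Real.exp (cD D t) := D.lam_def t ht

lemma cD_le (D : KosloffData) (t : ℕ) (ht : 1 ≤ t) : cD D t * D.M (t-1) ≤ D.eps t := by
  have he := D.eps_pos t ht
  have hM : (0:ℝ) < D.M (t-1) := by exact_mod_cast (Nat.zero_le _).trans_lt (M_gt D (t-1))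
  set x : ℝ := (D.M (t-1) : ℝ) / D.eps t with hx
  have hxp : 0 < x := by positivity
  have h1 : x ≤ (2:ℝ) ^ (⌊Real.logb 2 x⌋ + 1) := by
    have := (Int.lt_floor_add_one (Real.logb 2 x)).le
    rw [Real.logb_le_iff_le_rpow (by norm_num) hxp] at this
    rw [← Real.rpow_intCast]
    push_cast
    exact this
  unfold cD
  rw [← hx, zpow_neg, inv_mul_le_iff₀ (by positivity)]
  rw [hx, div_le_iff₀ he] at h1
  exact h1

lemma cD_mult (D : KosloffData) (s t : ℕ) (h : cD D t ≤ cD D s / 4) :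
    ∃ K : ℕ, 4 ≤ K ∧ cD D s = K * cD D t := by
  unfold cD at *
  generalize -(⌊Real.logb 2 ((D.M (t - 1) : ℝ) / D.eps t)⌋ + 1) = a at *
  generalize -(⌊Real.logb 2 ((D.M (s - 1) : ℝ) / D.eps s)⌋ + 1) = b at *
  have h2 : (2:ℝ)^a ≤ 2 ^ (b-2) := by
    rw [zpow_sub₀ (by norm_num)]; norm_num; linarith
  have h3 : a ≤ b - 2 := (zpow_le_zpow_iff_right₀ (by norm_num)).1 h2
  obtain ⟨k, hk⟩ := Int.eq_ofNat_of_zero_le (a := b - 2 - a) (by omega)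
  refine ⟨2^(k+2), ?_, ?_⟩
  · rw [pow_add]; have := Nat.one_le_two_pow (n := k); omega
  · have : b = ((k+2 : ℕ) : ℤ) + a := by push_cast; omega
    rw [this, zpow_add₀ (by norm_num), zpow_natCast]
    push_cast; rfl

def sT (D : KosloffData) (T : ℕ) (k : ℤ) : ℝ :=
  ∑ t ∈ Finset.Icc 1 T, if (-(D.N t : ℤ) < k ∧ k ≤ -(D.M (t-1) : ℤ)) then cD D t else 0

lemma p_eq {D : KosloffData} {p : ℤ → ℝ} {P : Measure Xspace} (hP : IsKosloffMeasure D p P)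
    (T : ℕ) : ∀ k : ℤ, -(D.M T : ℤ) < k → p k = 1 / (1 + Real.exp (sT D T k)) := by
  obtain ⟨-, h0, h1, h2, -⟩ := hP
  induction T with
  | zero =>
    intro k hk
    rw [D.M_zero] at hk
    rw [h0 k (by omega)]
    simp [sT]; norm_num
  | succ T ih =>
    intro k hk
    have hs : sT D (T+1) k = sT D T k +
        if (-(D.N (T+1) : ℤ) < k ∧ k ≤ -(D.M T : ℤ)) then cD D (T+1) else 0 := by
      unfold sT; rw [Finset.sum_Icc_succ_top (by omega)]; simp
    by_cases hk2 : -(D.M T : ℤ) < k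
    · rw [hs, if_neg (by omega), add_zero]; exact ih k hk2
    · have hz : sT D T k = 0 := by
        apply Finset.sum_eq_zero
        intro t ht
        rw [Finset.mem_Icc] at ht
        rw [if_neg]
        obtain ⟨u, rfl⟩ : ∃ u, t = u + 1 := ⟨t-1, by omega⟩
        have := (Mpos_succ D u).2
        have := (M_strictMono D).monotone ht.2
        omega
      rw [hs, hz, zero_add]
      by_cases hk3 : -(D.N (T+1) : ℤ) < k
      · rw [if_pos ⟨hk3, by omega⟩, h1 (T+1) (by omega) k hk3 (by simp; omega), lam_eq D _ (by omega)]
      · rw [if_neg (by omega), h2 (T+1) (by omega) k hk (by omega)]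
        simp; norm_num

lemma coordWt_exp (s : ℝ) (b : Bool) :
    coordWt (1 / (1 + Real.exp s)) b = Real.exp (if b then s else 0) / (1 + Real.exp s) := by
  have := Real.exp_pos s
  cases b <;> simp [coordWt]
  field_simp; ring

lemma coordWt_pos' {D : KosloffData} {p : ℤ → ℝ} {P : Measure Xspace} (hP : IsKosloffMeasure D p P)
    (k : ℤ) (b : Bool) : 0 < coordWt (p k) b := by
  have h := p_eq hP k.natAbs k (by have := M_gt D k.natAbs; omega)
  rw [h, coordWt_exp]
  positivity

/-- Lipschitz bound. -/
lemma coordWt_ratio (s t : ℝ) (b : Bool) :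
    coordWt (1 / (1 + Real.exp s)) b ≤
      Real.exp |s - t| * coordWt (1 / (1 + Real.exp t)) b := by
  have hs := Real.exp_pos s
  have ht := Real.exp_pos t
  have h1 : Real.exp s ≤ Real.exp |s-t| * Real.exp t := by
    rw [← Real.exp_add]; apply Real.exp_le_exp.2; linarith [le_abs_self (s-t)]
  have h2 : Real.exp t ≤ Real.exp |s-t| * Real.exp s := by
    rw [← Real.exp_add]; apply Real.exp_le_exp.2; linarith [neg_abs_le (s-t)]
  have h3 : 1 ≤ Real.exp |s-t| := Real.one_le_exp (abs_nonneg _)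
  rw [coordWt_exp, coordWt_exp, ← mul_div_assoc, div_le_div_iff₀ (by positivity) (by positivity)]
  cases b
  · simp; nlinarith
  · simp; nlinarith

lemma indic_sum (a b : ℤ) (n : ℕ) (J : Finset ℤ) :
    ∑ k ∈ J, |(if a < k - n ∧ k - n ≤ b then (1:ℝ) else 0) - (if a < k ∧ k ≤ b then 1 else 0)|
      ≤ 2 * n := by
  calc _ ≤ ∑ k ∈ J, ((if k ∈ Finset.Ioc a (a+n) then (1:ℝ) else 0) +
            (if k ∈ Finset.Ioc b (b+n) then (1:ℝ) else 0)) := by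
        apply Finset.sum_le_sum
        intro k _
        simp only [Finset.mem_Ioc]
        split_ifs <;> first | (norm_num; done) | (exfalso; omega)
    _ ≤ _ := by
        rw [Finset.sum_add_distrib]
        have : ∀ x : ℤ, ∑ k ∈ J, (if k ∈ Finset.Ioc x (x+n) then (1:ℝ) else 0) ≤ n := by
          intro x
          rw [← Finset.sum_filter, Finset.sum_const, nsmul_eq_mul, mul_one]
          have h : (J.filter (· ∈ Finset.Ioc x (x+n))).card ≤ (Finset.Ioc x (x+n)).card :=
            Finset.card_le_card fun y hy => (Finset.mem_filter.1 hy).2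
          rw [Int.card_Ioc] at h
          have h' : (J.filter (· ∈ Finset.Ioc x (x+n))).card ≤ n := by omega
          exact_mod_cast h'
        linarith [this a, this b]

lemma sT_tail (D : KosloffData) (τ T n : ℕ) (hτ : 1 ≤ τ) (hn : n ≤ D.M τ) (J : Finset ℤ)
    (hJ : ∀ k ∈ J, k ≤ -(D.N τ : ℤ)) :
    ∑ k ∈ J, |sT D T (k - n) - sT D T k| ≤ 2 * ∑ t ∈ Finset.Ioc τ T, D.eps t := by
  have key : ∀ k : ℤ, k ≤ -(D.N τ : ℤ) → sT D T k =
      ∑ t ∈ Finset.Ioc τ T, cD D t * if (-(D.N t : ℤ) < k ∧ k ≤ -(D.M (t-1) : ℤ)) then 1 else 0 := by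
    intro k hk
    unfold sT
    simp only [mul_ite, mul_one, mul_zero]
    symm
    apply Finset.sum_subset
    · intro t; simp; omega
    · intro t ht ht2
      simp at ht ht2
      rw [if_neg]
      have : D.N t ≤ D.N τ := by
        rcases Nat.lt_or_ge t τ with h | h
        · obtain ⟨u, rfl⟩ : ∃ u, t = u + 1 := ⟨t-1, by omega⟩
          obtain ⟨v, rfl⟩ : ∃ u, τ = u + 1 := ⟨τ-1, by omega⟩
          have h1 := Mpos_succ D u
          have h2 := Mpos_succ D v
          have h3 := (M_strictMono D).monotone (show u+1 ≤ v by omega)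
          omega
        · have : t = τ := by omega
          rw [this]
      omega
  calc _ ≤ ∑ k ∈ J, ∑ t ∈ Finset.Ioc τ T, cD D t *
        |(if (-(D.N t : ℤ) < k - n ∧ k - n ≤ -(D.M (t-1) : ℤ)) then (1:ℝ) else 0) -
          if (-(D.N t : ℤ) < k ∧ k ≤ -(D.M (t-1) : ℤ)) then 1 else 0| := by
        apply Finset.sum_le_sum
        intro k hk
        rw [key k (hJ k hk), key (k-n) (by have := hJ k hk; omega), ← Finset.sum_sub_distrib]
        refine (Finset.abs_sum_le_sum_abs _ _).trans (le_of_eq ?_)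
        apply Finset.sum_congr rfl
        intro t _
        rw [← mul_sub, abs_mul, abs_of_pos (cD_pos D t)]
    _ ≤ ∑ t ∈ Finset.Ioc τ T, cD D t * (2 * n) := by
        rw [Finset.sum_comm]
        apply Finset.sum_le_sum
        intro t _
        rw [← Finset.mul_sum]
        exact mul_le_mul_of_nonneg_left (indic_sum _ _ _ _) (cD_pos D t).le
    _ ≤ _ := by
        rw [Finset.mul_sum]
        apply Finset.sum_le_sum
        intro t ht
        simp at ht
        have h1 := cD_le D t (by omega)
        have h2 : (n:ℝ) ≤ D.M (t-1) := by
          exact_mod_cast hn.trans ((M_strictMono D).monotone (by omega))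
        have := mul_le_mul_of_nonneg_left h2 (cD_pos D t).le
        linarith

lemma tail_prod {D : KosloffData} {p : ℤ → ℝ} {P : Measure Xspace} (hP : IsKosloffMeasure D p P)
    (τ n : ℕ) (hτ : 1 ≤ τ) (hn : n ≤ D.M τ) (δ : ℝ)
    (hδ : ∀ T, 2 * ∑ t ∈ Finset.Ioc τ T, D.eps t ≤ δ) (J : Finset ℤ)
    (hJ : ∀ k ∈ J, k ≤ -(D.N τ : ℤ)) (w : Xspace) :
    ∏ k ∈ J, rr p n w k ≤ Real.exp δ ∧ Real.exp (-δ) ≤ ∏ k ∈ J, rr p n w k := by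
  obtain ⟨T, hT⟩ : ∃ T : ℕ, ∀ k ∈ J, -(D.M T : ℤ) < k - n := by
    refine ⟨(∑ k ∈ J, k.natAbs) + n, fun k hk => ?_⟩
    have h1 := Finset.single_le_sum (f := fun k : ℤ => k.natAbs) (fun i _ => Nat.zero_le _) hk
    have h2 := M_gt D ((∑ k ∈ J, k.natAbs) + n)
    omega
  have hs := (sT_tail D τ T n hτ hn J hJ).trans (hδ T)
  have hb : ∀ k ∈ J, rr p n w k ≤ Real.exp |sT D T (k - n) - sT D T k| ∧
      Real.exp (-|sT D T (k - n) - sT D T k|) ≤ rr p n w k := by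
    intro k hk
    have h0 := hT k hk
    have c1 := coordWt_pos' hP k (w k)
    have c2 := coordWt_pos' hP (k-n) (w k)
    unfold rr
    rw [Real.exp_neg, div_le_iff₀ c1, le_div_iff₀ c1, inv_mul_le_iff₀ (Real.exp_pos _)]
    rw [p_eq hP T k (by omega), p_eq hP T (k-n) h0]
    refine ⟨coordWt_ratio _ _ _, ?_⟩
    rw [abs_sub_comm]
    exact coordWt_ratio _ _ _
  have hpos : ∀ k ∈ J, 0 ≤ rr p n w k := fun k hk => (Real.exp_pos _).le.trans (hb k hk).2
  constructor
  · refine (Finset.prod_le_prod hpos fun k hk => (hb k hk).1).trans ?_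
    rw [← Real.exp_sum]
    exact Real.exp_le_exp.2 hs
  · refine le_trans ?_ (Finset.prod_le_prod (fun k _ => (Real.exp_pos _).le) fun k hk => (hb k hk).2)
    rw [← Real.exp_sum, Finset.sum_neg_distrib]
    exact Real.exp_le_exp.2 (neg_le_neg hs)

lemma meas_cyl (J : Finset ℤ) (b : Xspace) : MeasurableSet {w : Xspace | ∀ i ∈ J, w i = b i} := by
  have : {w : Xspace | ∀ i ∈ J, w i = b i} = ⋂ i ∈ J, (fun w : Xspace => w i) ⁻¹' {b i} := by
    ext w; simp
  rw [this]
  exact Finset.measurableSet_biInter _ fun i _ => (measurable_pi_apply i) (measurableSet_singleton _)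

/-- extend a finite word by `false`. -/
def extW (J : Finset ℤ) (u : J → Bool) : Xspace := fun i => if h : i ∈ J then u ⟨i, h⟩ else false

lemma restrict_preim (J : Finset ℤ) (u : J → Bool) :
    (J.restrict (π := fun _ => Bool)) ⁻¹' {u} = {w : Xspace | ∀ i ∈ J, w i = extW J u i} := by
  ext w
  simp only [Set.mem_preimage, Set.mem_singleton_iff, Set.mem_ofPred_eq, funext_iff, Subtype.forall,
    Finset.restrict, extW]
  refine forall_congr' fun i => forall_congr' fun h => ?_
  simp [h]

open Classical in
lemma decomp (μ : Measure Xspace) (J : Finset ℤ) (E : Set Xspace)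
    (hE : ∀ w w' : Xspace, (∀ i ∈ J, w i = w' i) → w ∈ E → w' ∈ E) :
    μ E = ∑ u : J → Bool with extW J u ∈ E, μ {w : Xspace | ∀ i ∈ J, w i = extW J u i} := by
  have h1 : E = (J.restrict (π := fun _ => Bool)) ⁻¹'
      ((Finset.univ.filter fun u : J → Bool => extW J u ∈ E : Finset _) : Set (J → Bool)) := by
    ext w
    simp only [Finset.coe_filter, Finset.mem_univ, true_and, Set.mem_preimage, Set.mem_ofPred_eq]
    constructor
    · exact hE _ _ fun i hi => by simp [extW, hi]
    · exact hE _ _ fun i hi => by simp [extW, hi]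
  conv_lhs => rw [h1]
  rw [← sum_measure_preimage_singleton]
  · exact Finset.sum_congr rfl fun u _ => by rw [restrict_preim]
  · intro u _
    rw [restrict_preim]; exact meas_cyl _ _

lemma measure_le_of_cyl (μ ν : Measure Xspace) [IsFiniteMeasure ν] (K₀ : ℕ)
    (h : ∀ K : ℕ, K₀ ≤ K → ∀ u : Xspace,
      μ {w : Xspace | ∀ i ∈ Finset.Icc (-(K:ℤ)) K, w i = u i} ≤
      ν {w : Xspace | ∀ i ∈ Finset.Icc (-(K:ℤ)) K, w i = u i}) : μ ≤ ν := by
  classical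
  have hopen : ∀ U : Set Xspace, IsOpen U → μ U ≤ ν U := by
    intro U hU
    let V : ℕ → Set Xspace := fun K => {w | {w' : Xspace | ∀ i ∈ Finset.Icc (-((K₀+K : ℕ):ℤ)) ((K₀+K:ℕ):ℤ), w' i = w i} ⊆ U}
    have hmono : Monotone V := by
      intro K L hKL w hw w' hw'
      apply hw
      intro i hi
      apply hw'
      simp only [Finset.mem_Icc] at hi ⊢
      omega
    have hUV : U = ⋃ K, V K := by
      ext w
      simp only [Set.mem_iUnion]
      constructor
      · intro hw
        obtain ⟨I, u, hu, hs⟩ := isOpen_pi_iff.1 hU w hw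
        refine ⟨∑ k ∈ I, k.natAbs, fun w' hw' => hs ?_⟩
        intro i hi
        rw [hw' i]
        · exact (hu i hi).2
        · have h1 := Finset.single_le_sum (f := fun k : ℤ => k.natAbs) (fun i _ => Nat.zero_le _) hi
          simp only [Finset.mem_Icc]
          omega
      · rintro ⟨K, hK⟩
        exact hK (by simp)
    rw [hUV, hmono.measure_iUnion, hmono.measure_iUnion]
    refine iSup_mono fun K => ?_
    have hV : ∀ w w' : Xspace, (∀ i ∈ Finset.Icc (-((K₀+K : ℕ):ℤ)) ((K₀+K:ℕ):ℤ), w i = w' i) → w ∈ V K → w' ∈ V K := by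
      intro w w' hww hw x hx
      exact hw fun i hi => (hx i hi).trans (hww i hi).symm
    rw [decomp μ _ _ hV, decomp ν _ _ hV]
    exact Finset.sum_le_sum fun u _ => h _ (by omega) _
  refine Measure.le_iff'.2 fun s => ?_
  rw [Set.measure_eq_iInf_isOpen s ν]
  refine le_iInf fun U => le_iInf fun hs => le_iInf fun hU => ?_
  exact (measure_mono hs).trans (hopen U hU)

lemma shiftInv_iter (n : ℕ) (w : Xspace) (i : ℤ) : shiftInv^[n] w i = w (i - n) := by
  induction n generalizing w with
  | zero => simp
  | succ n ih => rw [Function.iterate_succ_apply, ih]; simp [shiftInv]; congr 1; ring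

lemma shiftT_iter (n : ℕ) (w : Xspace) (i : ℤ) : shiftT^[n] w i = w (i + n) := by
  induction n generalizing w with
  | zero => simp
  | succ n ih => rw [Function.iterate_succ_apply, ih]; simp [shiftT]; congr 1; ring

lemma meas_shiftInv (n : ℕ) : Measurable (shiftInv^[n]) := by
  apply Measurable.iterate
  exact measurable_pi_lambda _ fun i => measurable_pi_apply _

lemma P_cyl {D : KosloffData} {p : ℤ → ℝ} {P : Measure Xspace} (hP : IsKosloffMeasure D p P)
    (k l : ℤ) (b : Xspace) : P {w : Xspace | ∀ i ∈ Finset.Icc k l, w i = b i}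
      = ENNReal.ofReal (∏ i ∈ Finset.Icc k l, coordWt (p i) (b i)) := by
  rw [hP.2.2.2.2, ENNReal.ofReal_prod_of_nonneg]
  exact fun i _ => (coordWt_pos' hP _ _).le

lemma Q_cyl {D : KosloffData} {p : ℤ → ℝ} {P : Measure Xspace} (hP : IsKosloffMeasure D p P)
    (n : ℕ) (k l : ℤ) (b : Xspace) :
    (Measure.map (shiftInv^[n]) P) {w : Xspace | ∀ i ∈ Finset.Icc k l, w i = b i}
      = ENNReal.ofReal (∏ i ∈ Finset.Icc k l, coordWt (p (i - n)) (b i)) := by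
  rw [Measure.map_apply (meas_shiftInv n) (meas_cyl _ _)]
  have : shiftInv^[n] ⁻¹' {w : Xspace | ∀ i ∈ Finset.Icc k l, w i = b i} =
      {w : Xspace | ∀ i ∈ Finset.Icc (k - n) (l - n), w i = (fun j => b (j + n)) i} := by
    ext w
    simp only [Set.mem_preimage, Set.mem_ofPred_eq, shiftInv_iter, Finset.mem_Icc]
    constructor
    · intro h i hi
      have := h (i + n) (by omega)
      simpa using this
    · intro h i hi
      have := h (i - n) (by omega)
      simpa using this
  rw [this, P_cyl hP]
  congr 1
  symm
  apply Finset.prod_bij (fun i _ => i - (n:ℤ))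
  · intro i hi; simp only [Finset.mem_Icc] at *; omega
  · intro i _ j _ h; omega
  · intro i hi; refine ⟨i + n, ?_, by ring⟩; simp only [Finset.mem_Icc] at *; omega
  · intro i hi; simp

lemma meas_rr (p : ℤ → ℝ) (n : ℕ) (k : ℤ) : Measurable fun w : Xspace => rr p n w k := by
  have : (fun w : Xspace => rr p n w k) =
    (fun b : Bool => coordWt (p (k - n)) b / coordWt (p k) b) ∘ fun w : Xspace => w k := rfl
  rw [this]
  exact (measurable_of_countable _).comp (measurable_pi_apply k)

/-- main part of the derivative -/
def gM (p : ℤ → ℝ) (N n : ℕ) (w : Xspace) : ℝ := ∏ k ∈ Finset.Ioo (-(N:ℤ)) n, rr p n w k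

lemma rr_pos {D : KosloffData} {p : ℤ → ℝ} {P : Measure Xspace} (hP : IsKosloffMeasure D p P)
    (n : ℕ) (w : Xspace) (k : ℤ) : 0 < rr p n w k :=
  div_pos (coordWt_pos' hP _ _) (coordWt_pos' hP _ _)

lemma withD_cyl {D : KosloffData} {p : ℤ → ℝ} {P : Measure Xspace} (hP : IsKosloffMeasure D p P)
    (N n : ℕ) (a : ℝ) (ha : 0 < a) (K : ℕ) (hK : N + n ≤ K) (u : Xspace) :
    (P.withDensity fun w => ENNReal.ofReal (a * gM p N n w))
      {w : Xspace | ∀ i ∈ Finset.Icc (-(K:ℤ)) K, w i = u i} =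
      ENNReal.ofReal (a * gM p N n u * ∏ i ∈ Finset.Icc (-(K:ℤ)) K, coordWt (p i) (u i)) := by
  have hg : 0 ≤ gM p N n u := Finset.prod_nonneg fun k _ => (rr_pos hP _ _ _).le
  rw [withDensity_apply _ (meas_cyl _ _), setLIntegral_congr_fun (g := fun _ => ENNReal.ofReal (a * gM p N n u)) (meas_cyl _ _),
    setLIntegral_const, P_cyl hP, ENNReal.ofReal_mul (mul_nonneg ha.le hg)]
  intro w hw
  have : gM p N n w = gM p N n u := by
    unfold gM rr
    apply Finset.prod_congr rfl
    intro k hk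
    rw [hw k]
    simp only [Finset.mem_Ioo, Finset.mem_Icc] at *
    omega
  simp only [this]

lemma prod_split {D : KosloffData} {p : ℤ → ℝ} {P : Measure Xspace} (hP : IsKosloffMeasure D p P)
    (N n : ℕ) (K : ℕ) (hK : N + n ≤ K) (u : Xspace) :
    ∏ i ∈ Finset.Icc (-(K:ℤ)) K, coordWt (p (i-n)) (u i) =
     (∏ k ∈ Finset.Icc (-(K:ℤ)) (-(N:ℤ)), rr p n u k) * gM p N n u * ∏ i ∈ Finset.Icc (-(K:ℤ)) K, coordWt (p i) (u i) := by
  have h1 : ∏ i ∈ Finset.Icc (-(K:ℤ)) K, coordWt (p (i-n)) (u i) = 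
     (∏ i ∈ Finset.Icc (-(K:ℤ)) K, rr p n u i) * ∏ i ∈ Finset.Icc (-(K:ℤ)) K, coordWt (p i) (u i) := by
    rw [← Finset.prod_mul_distrib]
    apply Finset.prod_congr rfl
    intro i _
    unfold rr
    rw [div_mul_cancel₀ _ (coordWt_pos' hP _ _).ne']
  rw [h1]
  congr 1
  unfold gM
  rw [← Finset.prod_union]
  · symm
    apply Finset.prod_subset
    · intro i; simp only [Finset.mem_union, Finset.mem_Icc, Finset.mem_Ioo]; omega
    · intro i hi hi2
      simp only [Finset.mem_union, Finset.mem_Icc, Finset.mem_Ioo] at hi hi2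
      have : (n:ℤ) ≤ i := by omega
      unfold rr
      rw [hP.2.1 i (by omega), hP.2.1 (i-n) (by omega)]
      apply div_self
      cases u i <;> norm_num [coordWt]
  · rw [Finset.disjoint_left]
    intro i; simp only [Finset.mem_Icc, Finset.mem_Ioo]; omega

lemma meas_gM (p : ℤ → ℝ) (N n : ℕ) : Measurable (gM p N n) := by
  unfold gM
  exact Finset.measurable_fun_prod _ fun k _ => meas_rr p n k

lemma fin_withD {D : KosloffData} {p : ℤ → ℝ} {P : Measure Xspace} (hP : IsKosloffMeasure D p P)
    (N n : ℕ) (a : ℝ) (ha : 0 < a) :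
    IsFiniteMeasure (P.withDensity fun w => ENNReal.ofReal (a * gM p N n w)) := by
  have : IsFiniteMeasure P := by have := hP.1; infer_instance
  have hfin : Set.Finite (Set.range (gM p N n)) := by
    have : Set.range (gM p N n) ⊆ Set.range (fun u : Finset.Ioo (-(N:ℤ)) (n:ℤ) → Bool => gM p N n (extW _ u)) := by
      rintro _ ⟨w, rfl⟩
      refine ⟨fun i => w i, ?_⟩
      unfold gM rr
      refine Finset.prod_congr rfl fun k hk => ?_
      simp [extW, Finset.mem_Ioo.1 hk]
    exact (Set.finite_range _).subset this
  obtain ⟨C, hC⟩ := hfin.bddAbove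
  apply isFiniteMeasure_withDensity
  refine ne_top_of_le_ne_top (b := ENNReal.ofReal (a * C) * P Set.univ) (ENNReal.mul_ne_top ENNReal.ofReal_ne_top (measure_ne_top _ _)) ?_
  rw [← lintegral_const]
  refine lintegral_mono fun w => ENNReal.ofReal_le_ofReal ?_
  exact mul_le_mul_of_nonneg_left (hC ⟨w, rfl⟩) ha.le

lemma rnD_bound {D : KosloffData} {p : ℤ → ℝ} {P : Measure Xspace} (hP : IsKosloffMeasure D p P)
    (N n : ℕ) (δ : ℝ)
    (ht : ∀ J : Finset ℤ, (∀ k ∈ J, k ≤ -(N : ℤ)) → ∀ w : Xspace,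
      ∏ k ∈ J, rr p n w k ≤ Real.exp δ ∧ Real.exp (-δ) ≤ ∏ k ∈ J, rr p n w k) :
    ∀ᵐ w ∂P, (rnD P n w).toReal ≤ Real.exp δ * gM p N n w ∧
      Real.exp (-δ) * gM p N n w ≤ (rnD P n w).toReal := by
  have hPp := hP.1
  have hQf : IsFiniteMeasure (Measure.map (shiftInv^[n]) P) := Measure.isFiniteMeasure_map _ _
  have hg : ∀ u, 0 ≤ gM p N n u := fun u => Finset.prod_nonneg fun k _ => (rr_pos hP _ _ _).le
  have hw : ∀ (K : ℕ) (u : Xspace), 0 ≤ ∏ i ∈ Finset.Icc (-(K:ℤ)) K, coordWt (p i) (u i) :=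
    fun K u => Finset.prod_nonneg fun i _ => (coordWt_pos' hP _ _).le
  have hJ : ∀ K : ℕ, ∀ k ∈ Finset.Icc (-(K:ℤ)) (-(N:ℤ)), k ≤ -(N:ℤ) := fun K k hk => (Finset.mem_Icc.1 hk).2
  have hf1 := fin_withD hP N n (Real.exp δ) (Real.exp_pos _)
  have hf2 := fin_withD hP N n (Real.exp (-δ)) (Real.exp_pos _)
  have hm : ∀ a, Measurable fun w => ENNReal.ofReal (a * gM p N n w) := fun a =>
    ((meas_gM p N n).const_mul a).ennreal_ofReal
  have h1 : Measure.map (shiftInv^[n]) P ≤ P.withDensity fun w => ENNReal.ofReal (Real.exp δ * gM p N n w) := by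
    apply measure_le_of_cyl _ _ (N + n)
    intro K hK u
    rw [withD_cyl hP N n _ (Real.exp_pos _) K hK, Q_cyl hP, prod_split hP N n K hK]
    apply ENNReal.ofReal_le_ofReal
    exact mul_le_mul_of_nonneg_right (mul_le_mul_of_nonneg_right (ht _ (hJ K) u).1 (hg u)) (hw K u)
  have h2 : (P.withDensity fun w => ENNReal.ofReal (Real.exp (-δ) * gM p N n w)) ≤ Measure.map (shiftInv^[n]) P := by
    apply measure_le_of_cyl _ _ (N + n)
    intro K hK u
    rw [withD_cyl hP N n _ (Real.exp_pos _) K hK, Q_cyl hP, prod_split hP N n K hK]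
    apply ENNReal.ofReal_le_ofReal
    exact mul_le_mul_of_nonneg_right (mul_le_mul_of_nonneg_right (ht _ (hJ K) u).2 (hg u)) (hw K u)
  have hac : Measure.map (shiftInv^[n]) P ≪ P :=
    h1.absolutelyContinuous.trans (withDensity_absolutelyContinuous _ _)
  have hset : ∀ s, ∫⁻ w in s, rnD P n w ∂P = Measure.map (shiftInv^[n]) P s := fun s => by
    have hL : (Measure.map (shiftInv^[n]) P).HaveLebesgueDecomposition P :=
      Measure.haveLebesgueDecomposition_of_sigmaFinite _ _
    exact Measure.setLIntegral_rnDeriv hac s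
  have hmr : Measurable (rnD P n) := Measure.measurable_rnDeriv _ _
  have e1 : rnD P n ≤ᵐ[P] fun w => ENNReal.ofReal (Real.exp δ * gM p N n w) := by
    apply ae_le_of_forall_setLIntegral_le_of_sigmaFinite hmr
    intro s hs _
    rw [hset, ← withDensity_apply _ hs]
    exact h1 s
  have e2 : (fun w => ENNReal.ofReal (Real.exp (-δ) * gM p N n w)) ≤ᵐ[P] rnD P n := by
    apply ae_le_of_forall_setLIntegral_le_of_sigmaFinite (hm _)
    intro s hs _
    rw [hset, ← withDensity_apply _ hs]
    exact h2 s
  filter_upwards [e1, e2] with w w1 w2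
  constructor
  · exact ENNReal.toReal_le_of_le_ofReal (mul_nonneg (Real.exp_pos _).le (hg w)) w1
  · exact (ENNReal.ofReal_le_iff_le_toReal (ne_top_of_le_ne_top ENNReal.ofReal_ne_top w1)).1 w2

lemma gM_eq {D : KosloffData} {p : ℤ → ℝ} {P : Measure Xspace} (hP : IsKosloffMeasure D p P)
    (τ l : ℕ) (hτ : 1 ≤ τ) (hl : 1 ≤ l) (hlM : (l + 1) * D.N τ ≤ D.M τ) (w : Xspace) :
    gM p (D.N τ) (l * D.N τ) w =
      ∏ k ∈ Finset.Ioo (-(D.N τ : ℤ)) 0,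
        coordWt (p k) (w (k + (l * D.N τ : ℕ))) / coordWt (p k) (w k) := by
  set N := D.N τ with hN
  set n := l * N with hn
  have hnN : N ≤ n := by rw [hn]; exact Nat.le_mul_of_pos_left _ hl
  have hnM : n + N ≤ D.M τ := by rw [hn]; linarith
  have half : ∀ k : ℤ, (0 ≤ k ∨ (-(D.M τ : ℤ) < k ∧ k ≤ -(N:ℤ))) → ∀ b, 2 * coordWt (p k) b = 1 := by
    rintro k hk b
    have : p k = 1/2 := by
      rcases hk with hk | hk
      · exact hP.2.1 k hk
      · exact hP.2.2.2.1 τ hτ k hk.1 hk.2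
    rw [this]; cases b <;> norm_num [coordWt]
  have h1 : gM p N n w = (∏ k ∈ Finset.Ioo (-(N:ℤ)) n, 2 * coordWt (p (k - n)) (w k)) /
      ∏ k ∈ Finset.Ioo (-(N:ℤ)) n, 2 * coordWt (p k) (w k) := by
    unfold gM rr
    rw [← Finset.prod_div_distrib]
    refine Finset.prod_congr rfl fun k _ => ?_
    rw [mul_div_mul_left _ _ (by norm_num)]
  have h2 : ∏ k ∈ Finset.Ioo (-(N:ℤ)) n, 2 * coordWt (p k) (w k) =
      ∏ k ∈ Finset.Ioo (-(N:ℤ)) 0, 2 * coordWt (p k) (w k) := by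
    symm
    apply Finset.prod_subset
    · intro i; simp only [Finset.mem_Ioo]; omega
    · intro i hi hi2
      simp only [Finset.mem_Ioo] at hi hi2
      exact half i (by omega) _
  have h3 : ∏ k ∈ Finset.Ioo (-(N:ℤ)) n, 2 * coordWt (p (k - n)) (w k) =
      ∏ k ∈ Finset.Ioo (-(N:ℤ)) 0, 2 * coordWt (p k) (w (k + n)) := by
    have : ∏ k ∈ Finset.Ioo (-(N:ℤ)) n, 2 * coordWt (p (k - n)) (w k) =
      ∏ k ∈ Finset.Ioo ((n:ℤ)-N) n, 2 * coordWt (p (k - n)) (w k) := by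
      symm
      apply Finset.prod_subset
      · intro i; simp only [Finset.mem_Ioo]; omega
      · intro i hi hi2
        simp only [Finset.mem_Ioo] at hi hi2
        exact half _ (by omega) _
    rw [this]
    symm
    apply Finset.prod_bij (fun i _ => i + (n:ℤ))
    · intro i hi; simp only [Finset.mem_Ioo] at *; omega
    · intro i _ j _ h; omega
    · intro i hi; refine ⟨i - n, ?_, by ring⟩; simp only [Finset.mem_Ioo] at *; omega
    · intro i hi; simp
  rw [h1, h2, h3, ← Finset.prod_div_distrib]
  refine Finset.prod_congr rfl fun k _ => ?_
  rw [mul_div_mul_left _ _ (by norm_num)]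

lemma gM_flip {D : KosloffData} {p : ℤ → ℝ} {P : Measure Xspace} (hP : IsKosloffMeasure D p P)
    (τ l : ℕ) (hτ : 1 ≤ τ) (hl : 1 ≤ l) (hlM : (l + 1) * D.N τ ≤ D.M τ) (w : Xspace)
    (S : Finset ℤ) (hS : ∀ k ∈ S, k ∈ Finset.Ioc (-(D.N τ : ℤ)) (-(D.M (τ-1) : ℤ)) ∧ w k = false)
    (hw : ∀ k ∈ Finset.Ioo (-(D.N τ : ℤ)) 0,
      w (k + (l * D.N τ : ℕ)) = if k ∈ S then true else w k) :
    gM p (D.N τ) (l * D.N τ) w = D.lam τ ^ S.card := by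
  rw [gM_eq hP τ l hτ hl hlM]
  have hsub : S ⊆ Finset.Ioo (-(D.N τ : ℤ)) 0 := by
    intro k hk
    have := (hS k hk).1
    have h2 := M_gt D (τ-1)
    simp only [Finset.mem_Ioo, Finset.mem_Ioc] at *
    omega
  have : ∀ k ∈ Finset.Ioo (-(D.N τ : ℤ)) 0,
      coordWt (p k) (w (k + (l * D.N τ : ℕ))) / coordWt (p k) (w k) =
        if k ∈ S then D.lam τ else 1 := by
    intro k hk
    rw [hw k hk]
    split_ifs with h
    · obtain ⟨h1, h2⟩ := hS k h
      rw [Finset.mem_Ioc] at h1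
      have hl : 0 < D.lam τ := by rw [lam_eq D τ hτ]; exact Real.exp_pos _
      rw [h2, hP.2.2.1 τ hτ k h1.1 h1.2]
      simp [coordWt]; field_simp; ring
    · exact div_self (coordWt_pos' hP _ _).ne'
  rw [Finset.prod_congr rfl this, Finset.prod_ite_mem, Finset.inter_eq_right.2 hsub,
    Finset.prod_const]

lemma indep {D : KosloffData} {p : ℤ → ℝ} {P : Measure Xspace} (hP : IsKosloffMeasure D p P)
    (a c d : ℤ) (hac : a ≤ c + 1) (hcd : c ≤ d) (E : Set Xspace)
    (hE : ∀ w w' : Xspace, (∀ i ∈ Finset.Icc a c, w i = w' i) → w ∈ E → w' ∈ E) (v : Xspace) :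
    P (E ∩ {w : Xspace | ∀ i ∈ Finset.Icc (c+1) d, w i = v i}) =
      P E * ENNReal.ofReal (∏ i ∈ Finset.Icc (c+1) d, coordWt (p i) (v i)) := by
  classical
  rw [← Measure.restrict_apply' (meas_cyl _ _), decomp _ _ _ hE, decomp P _ _ hE, Finset.sum_mul]
  refine Finset.sum_congr rfl fun u _ => ?_
  rw [Measure.restrict_apply' (meas_cyl _ _)]
  set u' := extW _ u
  have : {w : Xspace | ∀ i ∈ Finset.Icc a c, w i = u' i} ∩ {w : Xspace | ∀ i ∈ Finset.Icc (c+1) d, w i = v i}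
     = {w : Xspace | ∀ i ∈ Finset.Icc a d, w i = if i ≤ c then u' i else v i} := by
    ext w
    simp only [Set.mem_inter_iff, Set.mem_ofPred_eq, Finset.mem_Icc]
    constructor
    · rintro ⟨h1, h2⟩ i hi
      split_ifs with h
      · exact h1 i (by omega)
      · exact h2 i (by omega)
    · intro h
      constructor
      · intro i hi
        have := h i (by omega)
        rwa [if_pos (by omega)] at this
      · intro i hi
        have := h i (by omega)
        rwa [if_neg (by omega)] at this
  rw [this, P_cyl hP a d (fun i => if i ≤ c then u' i else v i), P_cyl hP, ← ENNReal.ofReal_mul (Finset.prod_nonneg fun i _ => (coordWt_pos' hP _ _).le)]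
  congr 1
  have hU : Finset.Icc a d = Finset.Icc a c ∪ Finset.Icc (c+1) d := by
    ext i; simp only [Finset.mem_union, Finset.mem_Icc]; omega
  rw [hU, Finset.prod_union]
  · congr 1
    · refine Finset.prod_congr rfl fun i hi => ?_
      rw [if_pos (Finset.mem_Icc.1 hi).2]
    · refine Finset.prod_congr rfl fun i hi => ?_
      rw [if_neg (by have := (Finset.mem_Icc.1 hi).1; omega)]
  · rw [Finset.disjoint_left]
    intro i; simp only [Finset.mem_Icc]; omega

def missE (N n : ℕ) (u v : Xspace) (j : ℕ) : Set Xspace :=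
  {w | (∀ i ∈ Finset.Icc (-(N:ℤ)+1) n, w i = u i) ∧
    ∀ i ∈ Finset.Icc 1 j, ¬ ∀ k ∈ Finset.Icc (-(N:ℤ)+1) n, w (k + (2 * i * N : ℕ)) = v k}

lemma miss_prob {D : KosloffData} {p : ℤ → ℝ} {P : Measure Xspace} (hP : IsKosloffMeasure D p P)
    (N n : ℕ) (hN : 1 ≤ N) (hn : n ≤ N) (u v : Xspace) (j : ℕ) :
    P.real (missE N n u v j) = (1 - (1/2)^(N+n))^j *
      P.real {w : Xspace | ∀ i ∈ Finset.Icc (-(N:ℤ)+1) n, w i = u i} := by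
  have hPp := hP.1
  induction j with
  | zero => simp [missE]
  | succ j ih =>
    set o : ℤ := ((2 * (j+1) * N : ℕ) : ℤ) with ho
    have ho' : o = 2 * j * N + 2 * N := by rw [ho]; push_cast; ring
    set C : Set Xspace := {w : Xspace | ∀ i ∈ Finset.Icc (o - N + 1) (o + n), w i = (fun i => v (i - o)) i} with hC
    have h1 : missE N n u v (j+1) = missE N n u v j \ C := by
      ext w
      simp only [missE, hC, Set.mem_sdiff, Set.mem_ofPred_eq, and_assoc]
      refine and_congr_right fun _ => ?_
      rw [← Finset.insert_Icc_right_eq_Icc_add_one (by omega), Finset.forall_mem_insert, and_comm]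
      refine and_congr_right fun _ => not_congr ?_
      rw [← ho]
      constructor
      · intro h i hi
        have := h (i - o) (by simp only [Finset.mem_Icc] at *; omega)
        simpa using this
      · intro h i hi
        have := h (i + o) (by simp only [Finset.mem_Icc] at *; omega)
        simpa using this
    have ho0 : 0 ≤ o := Int.natCast_nonneg _
    have hind := indep hP (-(N:ℤ)+1) (o - N) (o + n) (by linarith) (by omega) (missE N n u v j) ?_ (fun i => v (i - o))
    · have hprod : ∏ i ∈ Finset.Icc (o - N + 1) (o + n), coordWt (p i) (v (i - o)) = (1/2)^(N+n) := by
        rw [Finset.prod_eq_pow_card (b := (1/2:ℝ)), Int.card_Icc]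
        · congr 1; omega
        · intro i hi
          have hjN : (0:ℤ) ≤ 2 * j * N := by positivity
          rw [hP.2.1 i (by rw [Finset.mem_Icc] at hi; omega)]
          cases v (i - o) <;> norm_num [coordWt]
      rw [hprod] at hind
      have hr : P.real (missE N n u v j ∩ C) = P.real (missE N n u v j) * (1/2)^(N+n) := by
        rw [measureReal_def, hind, ENNReal.toReal_mul, ENNReal.toReal_ofReal (by positivity), measureReal_def]
      have := measureReal_inter_add_sdiff (μ := P) (s := missE N n u v j) (t := C) (meas_cyl _ _)
      rw [h1, pow_succ]
      rw [hr] at this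
      rw [show P.real (missE N n u v j \ C) = P.real (missE N n u v j) * (1 - (1/2)^(N+n)) by linarith, ih]
      ring
    · rintro w w' hww ⟨hw1, hw2⟩
      have hjN : (0:ℤ) ≤ 2 * j * N := by positivity
      constructor
      · intro i hi
        rw [← hw1 i hi, hww i]
        simp only [Finset.mem_Icc] at *; omega
      · intro i hi hcon
        apply hw2 i hi
        intro k hk
        rw [← hcon k hk, hww]
        simp only [Finset.mem_Icc] at *
        have : i * N ≤ j * N := Nat.mul_le_mul_right _ hi.2
        have h3 : (0:ℤ) ≤ (2 * i * N : ℕ) := by positivity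
        have h4 : ((2 * i * N : ℕ) : ℤ) ≤ 2 * j * N := by
          have : (2 * i * N) ≤ 2 * j * N := by nlinarith
          exact_mod_cast this
        omega

lemma chernoff {D : KosloffData} {p : ℤ → ℝ} {P : Measure Xspace} (hP : IsKosloffMeasure D p P)
    (n K : ℕ) (a : ℤ) (blk : Finset ℤ) (hblk : ∀ k ∈ blk, a ≤ k ∧ k < -(n:ℤ))
    (ha : a ≤ -(n:ℤ)) (hp : ∀ k ∈ blk, 2/5 ≤ p k) (hK : 4 ≤ K) (hcard : 8 * K ≤ blk.card)
    (b : Xspace) :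
    P.real {w : Xspace | (∀ i ∈ Finset.Icc (-(n:ℤ)) n, w i = b i) ∧
        (blk.filter fun k => w k = false).card < K} ≤
      1/20 * P.real {w : Xspace | ∀ i ∈ Finset.Icc (-(n:ℤ)) n, w i = b i} := by
  classical
  set J := Finset.Icc a n with hJ
  have hblkJ : blk ⊆ J := by
    intro k hk
    have := hblk k hk
    rw [hJ, Finset.mem_Icc]; omega
  set W := Finset.Icc (-(n:ℤ)) n with hW
  have hWJ : W ⊆ J := by
    intro k hk
    rw [hJ]; rw [hW] at hk
    simp only [Finset.mem_Icc] at *; omega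
  obtain ⟨E, hE⟩ : ∃ E : Set Xspace, E = {w : Xspace | (∀ i ∈ W, w i = b i) ∧ (blk.filter fun k => w k = false).card < K} := ⟨_, rfl⟩
  have hEm : ∀ w, w ∈ E ↔ ((∀ i ∈ W, w i = b i) ∧ (blk.filter fun k => w k = false).card < K) := by
    intro w; rw [hE]; rfl
  rw [← hE]
  clear hE
  have hdep : ∀ w w' : Xspace, (∀ i ∈ J, w i = w' i) →
      w ∈ E → w' ∈ E := by
    intro w w' h
    rw [hEm, hEm]
    rintro ⟨h1, h2⟩
    refine ⟨fun i hi => by rw [← h i (hWJ hi), h1 i hi], ?_⟩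
    rw [Finset.filter_congr (q := fun k => w k = false)]
    · exact h2
    · intro k hk; rw [h k (hblkJ hk)]
  have hwpos : ∀ k x, 0 ≤ coordWt (p k) x := fun k x => (coordWt_pos' hP k x).le
  rw [measureReal_def, decomp P J _ hdep, ENNReal.toReal_sum (by intro u _; have := hP.1; exact measure_ne_top _ _)]
  have hPc : ∀ u : Xspace, (P {w : Xspace | ∀ i ∈ J, w i = u i}).toReal = ∏ i ∈ J, coordWt (p i) (u i) := by
    intro u
    rw [hJ, P_cyl hP, ENNReal.toReal_ofReal (Finset.prod_nonneg fun i _ => hwpos _ _)]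
  have hPB : P.real {w : Xspace | ∀ i ∈ W, w i = b i} = ∏ i ∈ W, coordWt (p i) (b i) := by
    rw [measureReal_def, hW, P_cyl hP, ENNReal.toReal_ofReal (Finset.prod_nonneg fun i _ => hwpos _ _)]
  simp only [hPc]
  let th : ℤ → Bool → ℝ := fun i x => if i ∈ blk ∧ x = false then 1/16 else 1
  have hthpos : ∀ i x, 0 ≤ th i x := by intro i x; simp only [th]; split_ifs <;> norm_num
  let F : ℤ → Bool → ℝ := fun i x => coordWt (p i) x * th i x
  have hF : ∀ i x, 0 ≤ F i x := fun i x => mul_nonneg (hwpos i x) (hthpos i x)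
  let tt : J → Finset Bool := fun i => if (i:ℤ) ∈ W then {b i} else Finset.univ
  have hterm : ∀ u : J → Bool, (blk.filter fun k => extW J u k = false).card < K →
      ∏ i ∈ J, coordWt (p i) (extW J u i) ≤ 16^K * ∏ i : J, F i (u i) := by
    intro u hu
    have h1 : ∏ i : J, F i (u i) = ∏ i ∈ J, F i (extW J u i) := by
      rw [← Finset.prod_coe_sort J]
      refine Finset.prod_congr rfl fun i _ => ?_
      simp [extW]
    rw [h1, Finset.prod_mul_distrib]
    have h2 : ∏ i ∈ J, th i (extW J u i) = (1/16)^(blk.filter fun k => extW J u k = false).card := by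
      simp only [th]
      rw [← Finset.prod_filter, Finset.prod_const]
      congr 2
      ext k
      simp only [Finset.mem_filter]
      constructor
      · rintro ⟨_, h⟩; exact h
      · rintro h; exact ⟨hblkJ h.1, h⟩
    rw [h2]
    have h3 : (1/16:ℝ)^K ≤ (1/16)^(blk.filter fun k => extW J u k = false).card :=
      pow_le_pow_of_le_one (by norm_num) (by norm_num) hu.le
    have h4 : (16:ℝ)^K * (1/16)^K = 1 := by rw [← mul_pow]; norm_num
    have h5 : 0 ≤ ∏ i ∈ J, coordWt (p i) (extW J u i) := Finset.prod_nonneg fun i _ => hwpos _ _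
    have h6 : 1 ≤ 16^K * (1/16:ℝ)^(blk.filter fun k => extW J u k = false).card := by
      calc (1:ℝ) = 16^K * (1/16)^K := h4.symm
        _ ≤ _ := by gcongr
    nlinarith
  calc _ ≤ ∑ u ∈ Fintype.piFinset tt, 16^K * ∏ i : J, F i (u i) := by
        refine (Finset.sum_le_sum fun u hu => hterm u (by rw [Finset.mem_filter, hEm] at hu; exact hu.2.2)).trans ?_
        apply Finset.sum_le_sum_of_subset_of_nonneg
        · intro u hu
          rw [Fintype.mem_piFinset]
          intro i
          simp only [tt]
          split_ifs with h
          · rw [Finset.mem_filter, hEm] at hu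
            have := hu.2.1 i h
            simp [extW] at this
            simp [this]
          · simp
        · intro u _ _
          exact mul_nonneg (by positivity) (Finset.prod_nonneg fun i _ => hF _ _)
    _ = 16^K * ∏ i : J, ∑ x ∈ tt i, F i x := by
        rw [Finset.prod_univ_sum, Finset.mul_sum]
    _ = 16^K * ∏ i ∈ J, ∑ x ∈ (if i ∈ W then {b i} else Finset.univ), F i x := by
        rw [← Finset.prod_coe_sort J]
    _ ≤ 16^K * ∏ i ∈ J, ((if i ∈ W then coordWt (p i) (b i) else 1) * (if i ∈ blk then 5/8 else 1)) := by
        gcongr with i hi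
        · intro i _; exact Finset.sum_nonneg fun x _ => hF _ _
        · by_cases h1 : i ∈ W
          · have h2 : i ∉ blk := by
              intro h; have := hblk i h; rw [hW, Finset.mem_Icc] at h1; omega
            simp [h1, h2, F, th]
          · by_cases h2 : i ∈ blk
            · have := hp i h2
              simp [h1, h2, F, th, coordWt]
              linarith
            · simp [h1, h2, F, th, coordWt]
    _ = 16^K * ((∏ i ∈ W, coordWt (p i) (b i)) * (5/8)^blk.card) := by
        rw [Finset.prod_mul_distrib, Finset.prod_ite_mem, Finset.prod_ite_mem, Finset.inter_eq_right.2 hWJ,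
          Finset.inter_eq_right.2 hblkJ, Finset.prod_const]
    _ ≤ _ := by
        rw [hPB]
        have h0 : 0 ≤ ∏ i ∈ W, coordWt (p i) (b i) := Finset.prod_nonneg fun i _ => hwpos _ _
        have h1 : (5/8:ℝ)^blk.card ≤ (5/8)^(8*K) := pow_le_pow_of_le_one (by norm_num) (by norm_num) hcard
        have h2 : (16:ℝ)^K * (5/8)^(8*K) ≤ (2/5)^4 := by
          rw [pow_mul, ← mul_pow]
          calc _ ≤ (2/5:ℝ)^K := by gcongr; norm_num
            _ ≤ _ := pow_le_pow_of_le_one (by norm_num) (by norm_num) hK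
        have h3 : (16:ℝ)^K * (5/8)^blk.card ≤ 1/20 := by
          calc _ ≤ (16:ℝ)^K * (5/8)^(8*K) := by gcongr
            _ ≤ _ := h2.trans (by norm_num)
        nlinarith

lemma bad_prob {D : KosloffData} {p : ℤ → ℝ} {P : Measure Xspace} (hP : IsKosloffMeasure D p P)
    (N n : ℕ) (hN : 1 ≤ N) (hn : n ≤ N) (B : Set Xspace) (hBm : MeasurableSet B)
    (hB : ∀ w w' : Xspace, (∀ i ∈ Finset.Icc (-(N:ℤ)+1) n, w i = w' i) → w ∈ B → w' ∈ B)
    (v : Xspace → Xspace)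
    (hv : ∀ w w' : Xspace, (∀ i ∈ Finset.Icc (-(N:ℤ)+1) n, w i = w' i) →
      ∀ i ∈ Finset.Icc (-(N:ℤ)+1) n, v w i = v w' i) (j : ℕ) :
    P.real {w | w ∈ B ∧ ∀ i ∈ Finset.Icc 1 j,
        ¬ ∀ k ∈ Finset.Icc (-(N:ℤ)+1) n, w (k + (2 * i * N : ℕ)) = v w k} ≤
      (1 - (1/2)^(N+n))^j * P.real B := by
  classical
  have hPp := hP.1
  set J := Finset.Icc (-(N:ℤ)+1) n with hJ
  set Bd : Set Xspace := {w | w ∈ B ∧ ∀ i ∈ Finset.Icc 1 j,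
        ¬ ∀ k ∈ J, w (k + (2 * i * N : ℕ)) = v w k} with hBd
  have h1 : P Bd = (P.restrict Bd) B := by
    rw [Measure.restrict_apply hBm, Set.inter_eq_right.2]
    exact fun w hw => hw.1
  rw [measureReal_def, measureReal_def, h1, decomp _ J B hB, decomp P J B hB,
    ENNReal.toReal_sum (by intro u _; exact measure_ne_top _ _),
    ENNReal.toReal_sum (by intro u _; exact measure_ne_top _ _), Finset.mul_sum]
  refine Finset.sum_le_sum fun u _ => ?_
  rw [Measure.restrict_apply (meas_cyl _ _)]
  have := miss_prob hP N n hN hn (extW J u) (v (extW J u)) j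
  rw [measureReal_def, measureReal_def] at this
  rw [← this]
  apply ENNReal.toReal_mono (measure_ne_top _ _)
  apply measure_mono
  rintro w ⟨hw1, hw2⟩
  refine ⟨hw1, fun i hi hcon => hw2.2 i hi fun k hk => ?_⟩
  rw [hcon k hk]
  exact (hv _ _ hw1 k hk).symm

lemma eta_bound (N n : ℕ) (hN : 3 ≤ N) (hn : n ≤ N) :
    (1 - (1/2 : ℝ)^(N+n))^(2^(3*N-1)) ≤ 1/20 := by
  have hq : (1/2:ℝ)^(2*N) ≤ (1/2)^(N+n) := pow_le_pow_of_le_one (by norm_num) (by norm_num) (by omega)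
  have hq1 : (1/2:ℝ)^(N+n) ≤ 1 := pow_le_one₀ (by norm_num) (by norm_num)
  have h1 : 1 - (1/2:ℝ)^(N+n) ≤ Real.exp (-(1/2)^(2*N)) := by
    have := Real.one_sub_le_exp_neg ((1/2:ℝ)^(2*N)); linarith
  have h2 : (1 - (1/2 : ℝ)^(N+n))^(2^(3*N-1)) ≤ Real.exp (-(1/2)^(2*N)) ^ (2^(3*N-1)) :=
    pow_le_pow_left₀ (by linarith) h1 _
  rw [← Real.exp_nat_mul] at h2
  have h3 : ((2^(3*N-1) : ℕ) : ℝ) * -(1/2)^(2*N) = -2^(N-1) := by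
    push_cast
    rw [show 3*N-1 = (N-1) + 2*N by omega, pow_add]
    have : (2:ℝ)^(2*N) * (1/2)^(2*N) = 1 := by rw [← mul_pow]; norm_num
    linear_combination (-2^(N-1)) * this
  rw [h3] at h2
  have h4 : (4:ℝ) ≤ 2^(N-1) := by
    calc (4:ℝ) = 2^2 := by norm_num
      _ ≤ _ := pow_le_pow_right₀ (by norm_num) (by omega)
  refine h2.trans ((Real.exp_le_exp.2 (neg_le_neg h4)).trans ?_)
  rw [Real.exp_neg, inv_le_comm₀ (Real.exp_pos _) (by norm_num)]
  have : Real.exp 4 = Real.exp 1 ^ 4 := by rw [← Real.exp_nat_mul]; norm_num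
  rw [this]
  have h5 := Real.exp_one_gt_d9
  calc _ ≤ (2.7:ℝ)^4 := by norm_num
    _ ≤ _ := by gcongr; linarith

lemma tail_eps (D : KosloffData) (δ : ℝ) (hδ : 0 < δ) :
    ∀ᶠ τ : ℕ in atTop, ∀ T, 2 * ∑ t ∈ Finset.Ioc τ T, D.eps t ≤ δ := by
  obtain ⟨s, hs⟩ := summable_iff_vanishing_norm.1 D.eps_summable (δ/2) (by positivity)
  filter_upwards [eventually_ge_atTop (s.sup id)] with τ hτ T
  have := hs (Finset.Ioc τ T) (by
    rw [Finset.disjoint_left]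
    intro x hx hxs
    have := Finset.le_sup (f := id) hxs
    simp only [Finset.mem_Ioc, id] at *
    omega)
  have := (le_abs_self _).trans_lt this
  linarith

lemma cD_tendsto (D : KosloffData) (c : ℝ) (hc : 0 < c) : ∀ᶠ τ : ℕ in atTop, cD D τ ≤ c := by
  filter_upwards [D.eps_summable.tendsto_atTop_zero.eventually (gt_mem_nhds hc), eventually_ge_atTop 1] with τ h1 h2
  have h3 := cD_le D τ h2
  have h4 : (1:ℝ) ≤ D.M (τ-1) := by
    have := M_gt D (τ-1)
    exact_mod_cast (by omega : 1 ≤ D.M (τ-1))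
  nlinarith [cD_pos D τ]

lemma star_bound (D : KosloffData) (s τ K : ℕ) (hs : 1 ≤ s) (hsτ : s < τ)
    (hK : cD D s = K * cD D τ) : 8 * K ≤ D.nn τ := by
  have hstar := D.prop_star τ (by omega) (D.lam s ^ D.nn s) (by
    refine ⟨fun u => if u = s then (D.nn s : ℤ) else 0, ?_, ?_⟩
    · intro u
      simp only
      split_ifs with h
      · subst h; simp
      · simp
    · rw [Finset.prod_eq_single s]
      · simp
      · intro u _ hu; simp [hu]
      · intro h; exfalso; apply h; rw [Finset.mem_Icc]; omega)
  rw [lam_eq D s hs, lam_eq D τ (by omega), ← Real.exp_nat_mul, ← Real.exp_nat_mul, ← Real.exp_mul,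
    Real.exp_le_exp, hK] at hstar
  have hc := cD_pos D τ
  have hn : (1:ℝ) ≤ D.nn s := by exact_mod_cast D.nn_pos s hs
  have h1 : (K:ℝ) ≤ D.nn s * K := le_mul_of_one_le_left (by positivity) hn
  have h2 : (8:ℝ) * K ≤ D.nn τ := by
    push_cast at hstar
    have h3 : (8 * (D.nn s * K : ℝ)) * cD D τ ≤ D.nn τ * cD D τ := by linarith
    have := le_of_mul_le_mul_right h3 hc
    linarith
  exact_mod_cast h2

/-- EVC: for every `t₀`, every cylinder `B = [b]_{-n}^n` and every `ε > 0`
there is `τ` with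
`P(⋃_{l=1}^{m_τ/N_τ} (B ∩ T^{-lN_τ}B ∩ {|(T^{lN_τ})' - λ_{t₀}| ≤ ε})) ≥ 0.9 P(B)`. -/
theorem exists_tau_EVC (D : KosloffData) (p : ℤ → ℝ) (P : Measure Xspace)
    (hP : IsKosloffMeasure D p P)
    (t₀ : ℕ) (ht₀ : 1 ≤ t₀) (n : ℕ) (b : Xspace) (ε : ℝ) (hε : 0 < ε) :
    ∃ τ : ℕ,
      (9 / 10 : ENNReal) * P {w : Xspace | ∀ i ∈ Finset.Icc (-(n : ℤ)) (n : ℤ), w i = b i} ≤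
      P (⋃ l ∈ Finset.Icc 1 (D.m τ / D.N τ),
          ({w : Xspace | ∀ i ∈ Finset.Icc (-(n : ℤ)) (n : ℤ), w i = b i} ∩
            shiftT^[l * D.N τ] ⁻¹'
              {w : Xspace | ∀ i ∈ Finset.Icc (-(n : ℤ)) (n : ℤ), w i = b i} ∩
            {w : Xspace | |(rnD P (l * D.N τ) w).toReal - D.lam t₀| ≤ ε})) := by
  classical
  have hPp := hP.1
  have hlam : 0 < D.lam t₀ := by rw [lam_eq D t₀ ht₀]; exact Real.exp_pos _
  obtain ⟨δ, hδ, hδ1, hδ2⟩ : ∃ δ : ℝ, 0 < δ ∧ Real.exp δ * D.lam t₀ ≤ D.lam t₀ + ε ∧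
      D.lam t₀ - ε ≤ Real.exp (-δ) * D.lam t₀ := by
    have hc : ContinuousAt (fun x => Real.exp x * D.lam t₀) 0 := by fun_prop
    obtain ⟨η, hη, h⟩ := Metric.continuousAt_iff.1 hc ε hε
    have a1 := h (x := η/2) (by rw [Real.dist_eq, sub_zero, abs_of_pos] <;> linarith)
    have a2 := h (x := -(η/2)) (by rw [Real.dist_eq, sub_zero, abs_neg, abs_of_pos] <;> linarith)
    rw [Real.dist_eq, Real.exp_zero, one_mul, abs_lt] at a1 a2
    exact ⟨η/2, by linarith, by linarith [a1.2], by linarith [a2.1]⟩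
  obtain ⟨τ, hτtail, hτc1, hτc2, hτ1⟩ := ((tail_eps D δ hδ).and
    ((cD_tendsto D (cD D t₀ / 4) (by linarith [cD_pos D t₀])).and
    ((cD_tendsto D (1/3) (by norm_num)).and (eventually_ge_atTop (t₀ + n + 4))))).exists
  obtain ⟨K, hK4, hK⟩ := cD_mult D t₀ τ hτc1
  have hτ0 : 1 ≤ τ := by omega
  have h8K := star_bound D t₀ τ K ht₀ (by omega) hK
  have hMτ := M_gt D (τ-1)
  have hNdef := D.N_def τ hτ0
  have hMdef := D.M_def τ hτ0
  have hmdef := D.m_def τ hτ0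
  obtain ⟨N, hN⟩ : ∃ N, N = D.N τ := ⟨_, rfl⟩
  rw [← hN] at hNdef hMdef hmdef
  refine ⟨τ, ?_⟩
  rw [← hN]
  have hN4 : 3 ≤ N := by omega
  have hnN : n < N := by omega
  have hdiv : D.m τ / N = 2 + 2^(3*N) := by rw [hmdef, Nat.mul_div_cancel_left _ (by omega)]
  rw [hdiv]
  set B : Set Xspace := {w : Xspace | ∀ i ∈ Finset.Icc (-(n : ℤ)) (n : ℤ), w i = b i} with hB
  set blk := Finset.Ioc (-(N:ℤ)) (-(D.M (τ-1) : ℤ)) with hblk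
  set j := 2^(3*N-1) with hj
  have hj2 : 2 * j = 2^(3*N) := by
    rw [hj, ← pow_succ']; congr 1; omega
  have hcard : blk.card = D.nn τ := by rw [hblk, Int.card_Ioc]; omega
  let zs : Xspace → Finset ℤ := fun w => blk.filter fun k => w k = false
  have hSex : ∀ Z : Finset ℤ, ∃ S : Finset ℤ, K ≤ Z.card → S ⊆ Z ∧ S.card = K := by
    intro Z
    by_cases h : K ≤ Z.card
    · obtain ⟨S, h1, h2⟩ := Finset.exists_subset_card_eq h
      exact ⟨S, fun _ => ⟨h1, h2⟩⟩
    · exact ⟨∅, fun h' => absurd h' h⟩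
  choose S hS using hSex
  let v : Xspace → Xspace := fun w k => if k ∈ S (zs w) then true else w k
  set J := Finset.Icc (-(N:ℤ)+1) (n:ℤ) with hJ
  have hp : ∀ k ∈ blk, 2/5 ≤ p k := by
    intro k hk
    rw [hblk, Finset.mem_Ioc] at hk
    rw [hP.2.2.1 τ hτ0 k (by omega) hk.2, lam_eq D τ hτ0]
    have h1 : Real.exp (cD D τ) ≤ 3/2 := by
      refine (Real.exp_le_exp.2 hτc2).trans ?_
      have := Real.one_sub_le_exp_neg (1/3)
      rw [Real.exp_neg, le_inv_comm₀ (by norm_num) (Real.exp_pos _)] at this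
      refine this.trans (by norm_num)
    have h2 := Real.exp_pos (cD D τ)
    rw [le_div_iff₀ (by linarith)]
    linarith
  have hbad1 := chernoff hP n K (-(N:ℤ)+1) blk (by
    intro k hk; rw [hblk, Finset.mem_Ioc] at hk; omega) (by omega) hp hK4 (by omega) b
  have hzs : ∀ w w' : Xspace, (∀ i ∈ J, w i = w' i) → zs w = zs w' := by
    intro w w' h
    apply Finset.filter_congr
    intro k hk
    rw [h k]
    rw [hblk, Finset.mem_Ioc] at hk
    rw [hJ, Finset.mem_Icc]; omega
  have hbad2 := bad_prob hP N n (by omega) hnN.le B (meas_cyl _ _) (by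
    intro w w' h hw i hi
    rw [← h i (by simp only [Finset.mem_Icc] at *; omega)]
    exact hw i hi) v (by
    intro w w' h i hi
    simp only [v]
    rw [hzs w w' h, h i hi]) j
  have heta := eta_bound N n hN4 hnN.le
  rw [← hJ] at hbad2
  have hae : ∀ᵐ w ∂P, ∀ i : ℕ, i ∈ Finset.Icc 1 j →
      (rnD P (2 * i * N) w).toReal ≤ Real.exp δ * gM p N (2 * i * N) w ∧
      Real.exp (-δ) * gM p N (2 * i * N) w ≤ (rnD P (2 * i * N) w).toReal := by
    rw [ae_all_iff]
    intro i
    by_cases hi : i ∈ Finset.Icc 1 j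
    · have hi' := Finset.mem_Icc.1 hi
      have hle : 2 * i * N ≤ D.M τ := by
        rw [hMdef, hmdef]
        have : 2 * i * N ≤ (2^(3*N)) * N := Nat.mul_le_mul_right _ (by omega)
        nlinarith
      have := rnD_bound hP N (2*i*N) δ (fun J' hJ' w =>
        tail_prod hP τ (2*i*N) hτ0 hle δ hτtail J' (by rw [← hN]; exact hJ') w)
      filter_upwards [this] with w hw _ using hw
    · exact Eventually.of_forall fun w h => absurd h hi
  set U : Set Xspace := ⋃ l ∈ Finset.Icc 1 (2 + 2^(3*N)), (B ∩ shiftT^[l * N] ⁻¹' B ∩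
            {w : Xspace | |(rnD P (l * N) w).toReal - D.lam t₀| ≤ ε}) with hU
  have hcover : ∀ᵐ w ∂P, w ∈ B → w ∈ U ∪ ({w : Xspace | (∀ i ∈ Finset.Icc (-(n:ℤ)) n, w i = b i) ∧
        (blk.filter fun k => w k = false).card < K} ∪ {w | w ∈ B ∧ ∀ i ∈ Finset.Icc 1 j,
        ¬ ∀ k ∈ J, w (k + (2 * i * N : ℕ)) = v w k}) := by
    filter_upwards [hae] with w hw hwB
    by_cases hz : (zs w).card < K
    · exact Or.inr (Or.inl ⟨hwB, hz⟩)
    by_cases hno : ∀ i ∈ Finset.Icc 1 j, ¬ ∀ k ∈ J, w (k + (2 * i * N : ℕ)) = v w k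
    · exact Or.inr (Or.inr ⟨hwB, hno⟩)
    left
    push Not at hno
    obtain ⟨i, hi, hwi⟩ := hno
    have hi' := Finset.mem_Icc.1 hi
    obtain ⟨hS1, hS2⟩ := hS (zs w) (by omega)
    have hg : gM p N (2 * i * N) w = D.lam t₀ := by
      have h1 : (2 * i + 1) * D.N τ ≤ D.M τ := by
        rw [← hN, hMdef, hmdef]
        have : 2 * i * N ≤ (2^(3*N)) * N := Nat.mul_le_mul_right _ (by omega)
        nlinarith
      have := gM_flip hP τ (2*i) hτ0 (by omega) h1 w (S (zs w)) (by
        intro k hk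
        have := hS1 hk
        simp only [zs, Finset.mem_filter] at this
        rw [← hN]; exact this) (by
        intro k hk
        rw [← hN] at hk ⊢
        exact hwi k (by rw [hJ]; simp only [Finset.mem_Icc, Finset.mem_Ioo] at *; omega))
      rw [← hN, hS2] at this
      rw [this, lam_eq D τ hτ0, lam_eq D t₀ ht₀, ← Real.exp_nat_mul, hK]
    have hb := hw i hi
    rw [hg] at hb
    rw [hU, Set.mem_iUnion₂]
    refine ⟨2 * i, by rw [Finset.mem_Icc]; omega, ⟨hwB, ?_⟩, ?_⟩
    · intro k hk
      rw [shiftT_iter]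
      rw [hwi k (by rw [hJ]; simp only [Finset.mem_Icc] at *; omega)]
      simp only [v]
      rw [if_neg]
      · exact hwB k hk
      · intro hkS
        have := hS1 hkS
        simp only [zs, Finset.mem_filter, hblk, Finset.mem_Ioc] at this
        rw [Finset.mem_Icc] at hk
        omega
    · change |_| ≤ ε
      rw [abs_le]
      constructor <;> linarith [hb.1, hb.2]
  have hfin : P.real B ≤ P.real U + (1/20 * P.real B + 1/20 * P.real B) := by
    have h1 : P.real B ≤ P.real (U ∪ ({w : Xspace | (∀ i ∈ Finset.Icc (-(n:ℤ)) n, w i = b i) ∧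
        (blk.filter fun k => w k = false).card < K} ∪ {w | w ∈ B ∧ ∀ i ∈ Finset.Icc 1 j,
        ¬ ∀ k ∈ J, w (k + (2 * i * N : ℕ)) = v w k})) :=
      ENNReal.toReal_mono (measure_ne_top _ _) (measure_mono_ae hcover)
    have h2 : (1 - (1/2:ℝ)^(N+n))^j * P.real B ≤ 1/20 * P.real B :=
      mul_le_mul_of_nonneg_right heta measureReal_nonneg
    refine h1.trans ((measureReal_union_le _ _).trans ?_)
    refine add_le_add le_rfl ((measureReal_union_le _ _).trans ?_)
    exact add_le_add hbad1 (hbad2.trans h2)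
  have hfin2 : (9/10:ℝ) * P.real B ≤ P.real U := by linarith
  have e1 : P U = ENNReal.ofReal (P.real U) := (ofReal_measureReal (measure_ne_top _ _)).symm
  have e2 : P B = ENNReal.ofReal (P.real B) := (ofReal_measureReal (measure_ne_top _ _)).symm
  have e3 : (9/10 : ENNReal) = ENNReal.ofReal (9/10) := by
    rw [ENNReal.ofReal_div_of_pos (by norm_num)]; norm_num
  rw [e1, e2, e3, ← ENNReal.ofReal_mul (by norm_num)]
  exact ENNReal.ofReal_le_ofReal hfin2
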